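/- arXiv:math/0410179 — 2 statements merged into one kernel-verified Lean document; each statement's English description precedes it below -/
import Mathlib

section
/- Let N be an odd prime and r an integer not divisible by N. Then the quadratic Gauss sum G(r,N) := ∑_{l=1}^{N} exp(2πi·r·l²/N) satisfies: G(r,N) = (r|N)·√N if N ≡ 1 (mod 4), and G(r,N) = i·(r|N)·√N if N ≡ 3 (mod 4), where (r|N) denotes the Legendre symbol of r modulo N (equal to 1 if r is a nonzero square modulo N and −1 otherwise). -/
open Complex Finset

/-!
Let `N` be an odd prime, `χ` its quadratic character and `ψ x = exp (2πix / N)`. The number of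
square roots of `a` modulo `N` is `χ a + 1`, so `∑ ψ (x²)` is the Gauss sum of `χ` and `ψ`, and
replacing `ψ` by `x ↦ ψ (r x)` multiplies it by `χ r`. This reduces everything to `S = ∑ ψ (x²)`.

Substituting `x = y + d` in `S * conj S = ∑ ψ (x² - y²)` gives `S * conj S = N`, for every odd
`N = 2n + 1`. The argument of `S` is found following Gauss, again for every odd `N`. The
three-term recurrence of the Rogers–Szegő polynomials `∑ [m, k] xᵏ` at `x = -1` gives
`∑ (-1)ᵏ [2n, k] = ∏ (1 - q^(2j+1))`. For `q` a primitive `N`-th root of unity the summands on the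
left are the inverses of `q^(k(k+1)/2)`, and completing the square turns the identity into
`S = ∏ (ψ (2j+1) - ψ (-(2j+1))) = iⁿ ∏ 2 sin (2π (2j+1) / N)`, with `j < n`. Exactly the `⌊n/2⌋`
sines with `N < 2 (2j+1)` are negative.
-/

section CommSemiring

variable {R : Type*} [CommSemiring R]

/-- The Gaussian binomial coefficient `[m, k]` at `q`, defined by the first `q`-Pascal rule so
that it makes sense for every `q`, roots of unity included. -/
def gaussBinom (q : R) : ℕ → ℕ → R
  | _, 0 => 1
  | 0, _ + 1 => 0
  | m + 1, k + 1 => gaussBinom q m k + q ^ (k + 1) * gaussBinom q m (k + 1)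

theorem gaussBinom_zero_right (q : R) (m : ℕ) : gaussBinom q m 0 = 1 := by
  cases m <;> rfl

theorem gaussBinom_succ_succ (q : R) (m k : ℕ) :
    gaussBinom q (m + 1) (k + 1) =
      gaussBinom q m k + q ^ (k + 1) * gaussBinom q m (k + 1) := rfl

theorem gaussBinom_eq_zero_of_lt (q : R) {m k : ℕ} (h : m < k) :
    gaussBinom q m k = 0 := by
  induction m generalizing k with
  | zero => cases k with
    | zero => exact absurd h (lt_irrefl 0)
    | succ k => rfl
  | succ m ih => cases k with
    | zero => omega
    | succ k => rw [gaussBinom_succ_succ, ih (by omega), ih (by omega), mul_zero, add_zero]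

/-- The Rogers–Szegő polynomial `∑ [m, k] xᵏ` at `q`, as a function of `x`. -/
def rogersSzego (q : R) (m : ℕ) (x : R) : R :=
  ∑ k ∈ range (m + 1), gaussBinom q m k * x ^ k

theorem rogersSzego_eq_sum_add_one (q : R) (m : ℕ) (x : R) :
    rogersSzego q m x = ∑ k ∈ range (m + 1), gaussBinom q m (k + 1) * x ^ (k + 1) + 1 := by
  rw [sum_range_succ, gaussBinom_eq_zero_of_lt q m.lt_succ_self, zero_mul, add_zero,
    rogersSzego, sum_range_succ', gaussBinom_zero_right, pow_zero, mul_one]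

theorem rogersSzego_succ (q : R) (m : ℕ) (x : R) :
    rogersSzego q (m + 1) x = x * rogersSzego q m x + rogersSzego q m (q * x) := by
  rw [rogersSzego_eq_sum_add_one q m (q * x), ← add_assoc, rogersSzego, rogersSzego,
    sum_range_succ', mul_sum, ← sum_add_distrib, gaussBinom_zero_right, pow_zero, mul_one]
  congr 1
  refine sum_congr rfl fun k _ => ?_
  rw [gaussBinom_succ_succ]
  ring

end CommSemiring

section CommRing

variable {R : Type*} [CommRing R]

-- For `m < k` both sides vanish: the subtraction `m - k` is truncated.
theorem one_sub_pow_mul_gaussBinom_succ (q : R) (m k : ℕ) :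
    (1 - q ^ (k + 1)) * gaussBinom q m (k + 1) = (1 - q ^ (m - k)) * gaussBinom q m k := by
  induction m generalizing k with
  | zero => simp [gaussBinom]
  | succ m ih =>
    rcases lt_trichotomy k (m + 1) with hk | rfl | hk
    · obtain ⟨d, rfl⟩ := Nat.exists_eq_add_of_le (Nat.lt_succ_iff.mp hk)
      have hkd := ih k
      rw [Nat.add_sub_cancel_left] at hkd
      rw [gaussBinom_succ_succ, show k + d + 1 - k = d + 1 by omega]
      cases k with
      | zero =>
        simp only [gaussBinom_zero_right] at hkd ⊢
        linear_combination q * hkd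
      | succ k =>
        have hkd' := ih k
        rw [show k + 1 + d - k = d + 1 by omega] at hkd'
        rw [gaussBinom_succ_succ]
        linear_combination q ^ (k + 1 + 1) * hkd + hkd'
    · simp [gaussBinom_eq_zero_of_lt q (m + 1).lt_succ_self]
    · simp [gaussBinom_eq_zero_of_lt q hk,
        gaussBinom_eq_zero_of_lt q (hk.trans k.lt_succ_self)]

theorem gaussBinom_succ_succ' (q : R) (m k : ℕ) :
    gaussBinom q (m + 1) (k + 1) =
      gaussBinom q m (k + 1) + q ^ (m - k) * gaussBinom q m k := by
  linear_combination gaussBinom_succ_succ q m k - one_sub_pow_mul_gaussBinom_succ q m k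

theorem rogersSzego_succ_mul (q : R) (m : ℕ) (x : R) :
    rogersSzego q (m + 1) (q * x) =
      q ^ (m + 1) * x * rogersSzego q m x + rogersSzego q m (q * x) := by
  rw [rogersSzego_eq_sum_add_one q m (q * x), ← add_assoc, rogersSzego, rogersSzego,
    sum_range_succ', mul_sum, ← sum_add_distrib, gaussBinom_zero_right, pow_zero, mul_one]
  congr 1
  refine sum_congr rfl fun k hk => ?_
  obtain ⟨d, rfl⟩ := Nat.exists_eq_add_of_le (mem_range_succ_iff.mp hk)
  rw [gaussBinom_succ_succ', Nat.add_sub_cancel_left]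
  ring

theorem rogersSzego_add_two (q : R) (m : ℕ) (x : R) :
    rogersSzego q (m + 2) x =
      (1 + x) * rogersSzego q (m + 1) x - (1 - q ^ (m + 1)) * x * rogersSzego q m x := by
  linear_combination rogersSzego_succ q (m + 1) x + rogersSzego_succ_mul q m x -
    rogersSzego_succ q m x

theorem rogersSzego_two_mul_neg_one (q : R) (n : ℕ) :
    rogersSzego q (2 * n) (-1) = ∏ j ∈ range n, (1 - q ^ (2 * j + 1)) := by
  induction n with
  | zero => simp [rogersSzego, gaussBinom]
  | succ n ih =>
    rw [prod_range_succ, ← ih, mul_add_one, rogersSzego_add_two]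
    ring

end CommRing

section PrimitiveRoot

variable {R : Type*} [CommRing R] [IsDomain R] {p q : R} {m : ℕ}

theorem pow_succ_mul_gaussBinom_succ (hq : IsPrimitiveRoot q (m + 1)) {k : ℕ}
    (hk : k < m) : q ^ (k + 1) * gaussBinom q m (k + 1) = -gaussBinom q m k := by
  have hne : 1 - q ^ (k + 1) ≠ 0 :=
    sub_ne_zero.mpr (hq.pow_ne_one_of_pos_of_lt k.succ_ne_zero (by omega)).symm
  have hpow : q ^ (k + 1) * q ^ (m - k) = 1 := by
    rw [← pow_add, show k + 1 + (m - k) = m + 1 by omega, hq.pow_eq_one]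
  refine mul_left_cancel₀ hne ?_
  linear_combination
    q ^ (k + 1) * one_sub_pow_mul_gaussBinom_succ q m k - gaussBinom q m k * hpow

theorem pow_choose_mul_gaussBinom (hq : IsPrimitiveRoot q (m + 1)) {k : ℕ} (hk : k ≤ m) :
    q ^ (k + 1).choose 2 * gaussBinom q m k = (-1) ^ k := by
  induction k with
  | zero => simp [gaussBinom_zero_right]
  | succ k ih =>
    rw [Nat.choose_succ_succ', Nat.choose_one_right, add_comm, pow_add, mul_assoc,
      pow_succ_mul_gaussBinom_succ hq hk, mul_neg, ih (by omega), pow_succ]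
    ring

theorem rogersSzego_neg_one_eq_sum (hq : IsPrimitiveRoot q (m + 1)) (hpq : p * q = 1) :
    rogersSzego q m (-1) = ∑ k ∈ range (m + 1), p ^ (k + 1).choose 2 := by
  refine sum_congr rfl fun k hk => ?_
  calc gaussBinom q m k * (-1) ^ k
      = (p * q) ^ (k + 1).choose 2 * (gaussBinom q m k * (-1) ^ k) := by
        rw [hpq, one_pow, one_mul]
    _ = p ^ (k + 1).choose 2 *
          (q ^ (k + 1).choose 2 * gaussBinom q m k * (-1) ^ k) := by
        rw [mul_pow]; ring
    _ = p ^ (k + 1).choose 2 := by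
        rw [pow_choose_mul_gaussBinom hq (mem_range_succ_iff.mp hk), ← mul_pow]; simp

end PrimitiveRoot

section ZMod

variable {M : Type*} [AddCommMonoid M] {N : ℕ} [NeZero N]

theorem sum_range_add_natCast_zmod (f : ZMod N → M) (a : ZMod N) :
    ∑ k ∈ range N, f (a + k) = ∑ x, f x := by
  rw [← Equiv.sum_comp (Equiv.addLeft a)]
  refine sum_nbij' (fun k => (k : ZMod N)) ZMod.val (by simp) (by simp [ZMod.val_lt]) ?_
    (by simp) (by simp)
  exact fun k hk => ZMod.val_cast_of_lt (mem_range.mp hk)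

theorem isPrimitiveRoot_of_isPrimitive {C : Type*} [CommMonoid C] {ψ : AddChar (ZMod N) C}
    (hψ : ψ.IsPrimitive) {a : ZMod N} (ha : IsUnit a) : IsPrimitiveRoot (ψ a) N where
  pow_eq_one := by
    rw [← AddChar.map_nsmul_eq_pow, nsmul_eq_mul, ZMod.natCast_self, zero_mul,
      AddChar.map_zero_eq_one]
  dvd_of_pow_eq_one k hk := by
    rw [← AddChar.map_nsmul_eq_pow, hψ.zmod_char_eq_one_iff, nsmul_eq_mul,
      ha.mul_left_eq_zero] at hk
    exact (ZMod.natCast_eq_zero_iff k N).mp hk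

end ZMod

section Product

variable {n : ℕ}

theorem zmod_two_mul_add_one_eq_one (n : ℕ) : (2 : ZMod (2 * n + 1)) * (n + 1) = 1 := by
  have h : ((2 * n + 1 : ℕ) : ZMod (2 * n + 1)) = 0 := ZMod.natCast_self _
  push_cast at h
  linear_combination h

theorem sum_addChar_sq_eq_mul_sum {R : Type*} [CommSemiring R]
    (ψ : AddChar (ZMod (2 * n + 1)) R) :
    ∑ x, ψ (x ^ 2) =
      ψ ((n + 1) ^ 2) * ∑ k ∈ range (2 * n + 1), ψ 2 ^ (k + 1).choose 2 := by
  rw [← sum_range_add_natCast_zmod _ ((n : ZMod (2 * n + 1)) + 1), mul_sum]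
  refine sum_congr rfl fun k _ => ?_
  have hchoose : ((k + 1).choose 2 : ZMod (2 * n + 1)) * 2 = (k + 1) * k := by
    simpa using congrArg (Nat.cast (R := ZMod (2 * n + 1))) (Nat.add_one_mul_choose_eq k 1).symm
  rw [← AddChar.map_nsmul_eq_pow, ← AddChar.map_add_eq_mul, nsmul_eq_mul]
  congr 1
  linear_combination (k : ZMod (2 * n + 1)) * zmod_two_mul_add_one_eq_one n - hchoose

theorem prod_range_addChar_odd {A M : Type*} [CommSemiring A] [CommMonoid M] (ψ : AddChar A M)
    (m : ℕ) : ∏ j ∈ range m, ψ (2 * j + 1) = ψ (m ^ 2) := by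
  refine prod_range_induction _ (fun j : ℕ => ψ ((j : A) ^ 2)) (by simp) m fun j _ => ?_
  rw [← AddChar.map_add_eq_mul]
  push_cast
  ring_nf

theorem sum_addChar_sq_eq_prod {R : Type*} [CommRing R] [IsDomain R]
    {ψ : AddChar (ZMod (2 * n + 1)) R} (hψ : ψ.IsPrimitive) :
    ∑ x, ψ (x ^ 2) = ∏ j ∈ range n, (ψ (2 * j + 1) - ψ (-(2 * j + 1))) := by
  have hunit : IsUnit (-2 : ZMod (2 * n + 1)) :=
    (IsUnit.of_mul_eq_one _ (zmod_two_mul_add_one_eq_one n)).neg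
  have hmul : ψ 2 * ψ (-2) = 1 := by
    rw [← AddChar.map_add_eq_mul, add_neg_cancel, AddChar.map_zero_eq_one]
  have hsq : ((n : ZMod (2 * n + 1)) + 1) ^ 2 = n ^ 2 := by
    linear_combination zmod_two_mul_add_one_eq_one n
  rw [sum_addChar_sq_eq_mul_sum, hsq, ← prod_range_addChar_odd,
    ← rogersSzego_neg_one_eq_sum (isPrimitiveRoot_of_isPrimitive hψ hunit) hmul,
    rogersSzego_two_mul_neg_one, ← prod_mul_distrib]
  refine prod_congr rfl fun j _ => ?_
  rw [mul_one_sub, ← AddChar.map_nsmul_eq_pow, ← AddChar.map_add_eq_mul]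
  congr 2
  simp only [nsmul_eq_mul]
  push_cast
  ring

end Product

theorem sum_addChar_sq_mul_sum_neg {R R' : Type*} [CommRing R] [Fintype R] [CommRing R']
    [IsDomain R'] (h2 : IsUnit (2 : R)) {ψ : AddChar R R'} (hψ : ψ.IsPrimitive) :
    (∑ x, ψ (x ^ 2)) * ∑ x, ψ (-x ^ 2) = Fintype.card R := by
  classical
  calc (∑ x, ψ (x ^ 2)) * ∑ y, ψ (-y ^ 2)
      = ∑ y, ∑ x, ψ (x ^ 2 - y ^ 2) := by
        simp only [sum_mul_sum, ← AddChar.map_add_eq_mul, ← sub_eq_add_neg]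
        exact sum_comm
    _ = ∑ y, ∑ d, ψ (d ^ 2) * ψ (y * (2 * d)) := by
        refine sum_congr rfl fun y _ => ?_
        rw [← Equiv.sum_comp (Equiv.addRight y)]
        refine sum_congr rfl fun d _ => ?_
        rw [← AddChar.map_add_eq_mul, Equiv.coe_addRight]
        ring_nf
    _ = ∑ d, ψ (d ^ 2) * ∑ y, ψ (y * (2 * d)) := by
        rw [sum_comm]
        simp only [mul_sum]
    _ = Fintype.card R := by
        simp [AddChar.sum_mulShift _ hψ, h2.mul_right_eq_zero]

section QuadraticChar

variable {F R : Type*} [Field F] [Fintype F] [DecidableEq F] [CommRing R] [IsDomain R]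

theorem sum_comp_sq {M : Type*} [AddCommGroup M] (hF : ringChar F ≠ 2) (f : F → M) :
    ∑ x, f (x ^ 2) = ∑ a, (quadraticChar F a + 1) • f a := by
  rw [← sum_fiberwise univ (fun x : F => x ^ 2)]
  refine sum_congr rfl fun a _ => ?_
  rw [sum_congr rfl fun x hx => congrArg f (mem_filter.mp hx).2, sum_const,
    ← quadraticChar_card_sqrts hF a, natCast_zsmul]
  congr 2
  ext
  simp

theorem sum_addChar_sq_eq_gaussSum (hF : ringChar F ≠ 2) {ψ : AddChar F R} (hψ : ψ ≠ 1) :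
    ∑ x, ψ (x ^ 2) = gaussSum ((quadraticChar F).ringHomComp (Int.castRingHom R)) ψ := by
  simp [sum_comp_sq hF, add_mul, sum_add_distrib, AddChar.sum_eq_zero_of_ne_one hψ, gaussSum]

theorem sum_addChar_mul_sq (hF : ringChar F ≠ 2) {ψ : AddChar F R} (hψ : ψ ≠ 1) {a : F}
    (ha : a ≠ 0) : ∑ x, ψ (a * x ^ 2) = quadraticChar F a * ∑ x, ψ (x ^ 2) := by
  have hχ : (quadraticChar F a : R) * quadraticChar F a = 1 := by
    rw [← sq]
    exact_mod_cast congrArg (Int.cast (R := R)) (quadraticChar_sq_one ha)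
  have hshift := gaussSum_mulShift
    ((quadraticChar F).ringHomComp (Int.castRingHom R)) ψ (Units.mk0 a ha)
  rw [← sum_addChar_sq_eq_gaussSum hF hψ, Units.val_mk0, ← sum_addChar_sq_eq_gaussSum hF
    (AddChar.IsPrimitive.of_ne_one hψ ha)] at hshift
  rw [← hshift, MulChar.ringHomComp_apply, eq_intCast, ← mul_assoc, hχ, one_mul]
  simp only [AddChar.mulShift_apply]

end QuadraticChar

section Sine

/-- The product of the numbers `2 sin (2πk / N)` over the odd `k < N = 2n + 1`; it agrees with
the quadratic Gauss sum of the odd modulus `N` up to a power of `i`. -/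
noncomputable def sineProduct (n : ℕ) : ℝ :=
  ∏ j ∈ range n, 2 * Real.sin (2 * Real.pi * ((2 * j + 1 : ℕ) / (2 * n + 1 : ℕ)))

theorem sin_two_pi_mul_pos {x : ℝ} (h0 : 0 < x) (h1 : x < 1 / 2) :
    0 < Real.sin (2 * Real.pi * x) :=
  Real.sin_pos_of_pos_of_lt_pi (by positivity) (by nlinarith [Real.pi_pos])

theorem sin_two_pi_mul_neg {x : ℝ} (h0 : 1 / 2 < x) (h1 : x < 1) :
    Real.sin (2 * Real.pi * x) < 0 := by
  rw [← Real.sin_sub_two_pi]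
  exact Real.sin_neg_of_neg_of_neg_pi_lt (by nlinarith [Real.pi_pos]) (by nlinarith [Real.pi_pos])

theorem neg_one_pow_mul_sineProduct_pos (n : ℕ) : 0 < (-1) ^ (n / 2) * sineProduct n := by
  have hN : (0 : ℝ) < (2 * n + 1 : ℕ) := by positivity
  have hsplit : n = (n - n / 2) + n / 2 := by omega
  have hsign : (-1 : ℝ) ^ (n / 2) = ∏ _j ∈ range (n / 2), (-1 : ℝ) := by simp
  rw [sineProduct]
  nth_rw 2 [hsplit]
  rw [prod_range_add, mul_left_comm, hsign, ← prod_mul_distrib]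
  refine mul_pos (prod_pos fun j hj => ?_) (prod_pos fun j hj => ?_) <;> rw [mem_range] at hj
  · refine mul_pos two_pos (sin_two_pi_mul_pos (by positivity) ?_)
    rw [div_lt_div_iff₀ hN two_pos]
    exact_mod_cast (by omega : (2 * j + 1) * 2 < 1 * (2 * n + 1))
  · have hneg : Real.sin (2 * Real.pi *
        ((2 * (n - n / 2 + j) + 1 : ℕ) / (2 * n + 1 : ℕ))) < 0 := by
      refine sin_two_pi_mul_neg ?_ ?_
      · rw [div_lt_div_iff₀ two_pos hN]
        exact_mod_cast (by omega : 1 * (2 * n + 1) < (2 * (n - n / 2 + j) + 1) * 2)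
      · rw [div_lt_one hN]
        exact_mod_cast (by omega : 2 * (n - n / 2 + j) + 1 < 2 * n + 1)
    linarith

theorem stdAddChar_sub_stdAddChar_neg {N : ℕ} [NeZero N] (k : ℤ) :
    (ZMod.stdAddChar (k : ZMod N) - ZMod.stdAddChar (-k : ZMod N) : ℂ) =
      I * (2 * Real.sin (2 * Real.pi * (k / N)) : ℝ) := by
  have harg : ((2 * Real.pi * (k / N) : ℝ) : ℂ) * I = 2 * Real.pi * I * k / N := by
    push_cast
    ring
  rw [← Int.cast_neg, ZMod.stdAddChar_coe, ZMod.stdAddChar_coe, ofReal_mul, ofReal_sin,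
    ofReal_ofNat, two_sin, neg_mul, harg, Int.cast_neg, mul_neg, neg_div]
  linear_combination (cexp (2 * Real.pi * I * k / N) - cexp (-(2 * Real.pi * I * k / N))) * I_sq

theorem sum_stdAddChar_sq_eq_sineProduct (n : ℕ) :
    ∑ x : ZMod (2 * n + 1), ZMod.stdAddChar (x ^ 2) = I ^ n * sineProduct n := by
  have hI : I ^ n = ∏ _j ∈ range n, I := by simp
  rw [sum_addChar_sq_eq_prod (ZMod.isPrimitive_stdAddChar _), sineProduct, ofReal_prod, hI,
    ← prod_mul_distrib]
  refine prod_congr rfl fun j _ => ?_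
  simpa using stdAddChar_sub_stdAddChar_neg (N := 2 * n + 1) (2 * j + 1)

theorem sineProduct_sq (n : ℕ) : sineProduct n ^ 2 = (2 * n + 1 : ℕ) := by
  have hconj : ∑ x : ZMod (2 * n + 1), ZMod.stdAddChar (-x ^ 2) = (-I) ^ n * sineProduct n := by
    simp [AddChar.map_neg_eq_conj, ← map_sum, sum_stdAddChar_sq_eq_sineProduct]
  have hnorm := sum_addChar_sq_mul_sum_neg (IsUnit.of_mul_eq_one _ (zmod_two_mul_add_one_eq_one n))
    (ZMod.isPrimitive_stdAddChar (2 * n + 1))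
  rw [sum_stdAddChar_sq_eq_sineProduct, hconj, ZMod.card, mul_mul_mul_comm, ← mul_pow,
    mul_neg, I_mul_I, neg_neg, one_pow, one_mul, ← sq] at hnorm
  exact_mod_cast hnorm

theorem sineProduct_eq (n : ℕ) : sineProduct n = (-1) ^ (n / 2) * √(2 * n + 1 : ℕ) := by
  have hsign : ((-1 : ℝ) ^ (n / 2)) * (-1) ^ (n / 2) = 1 := by simp [← mul_pow]
  have habs : (-1) ^ (n / 2) * sineProduct n = √(2 * n + 1 : ℕ) := by
    rw [← sineProduct_sq, ← Real.sqrt_sq (neg_one_pow_mul_sineProduct_pos n).le, mul_pow,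
      sq ((-1 : ℝ) ^ _), hsign, one_mul]
  rw [← habs, ← mul_assoc, hsign, one_mul]

theorem sum_stdAddChar_sq (n : ℕ) :
    ∑ x : ZMod (2 * n + 1), ZMod.stdAddChar (x ^ 2) = I ^ (n % 2) * √(2 * n + 1 : ℕ) := by
  have hI : I ^ n = (-1) ^ (n / 2) * I ^ (n % 2) := by
    rw [← I_sq, ← pow_mul, ← pow_add, Nat.div_add_mod]
  have hsign : ((-1 : ℂ) ^ (n / 2)) * (-1) ^ (n / 2) = 1 := by simp [← mul_pow]
  rw [sum_stdAddChar_sq_eq_sineProduct, sineProduct_eq, hI]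
  push_cast
  linear_combination I ^ (n % 2) * √(2 * n + 1) * hsign

end Sine

theorem sum_Icc_exp_eq_sum_stdAddChar (N : ℕ) [NeZero N] (r : ℤ) :
    ∑ l ∈ Icc 1 N, exp (2 * Real.pi * I * r * (l : ℂ) ^ 2 / N) =
      ∑ x : ZMod N, ZMod.stdAddChar ((r : ZMod N) * x ^ 2) := by
  rw [← sum_range_add_natCast_zmod _ 1, ← Ico_add_one_right_eq_Icc, sum_Ico_eq_sum_range,
    Nat.add_sub_cancel]
  refine sum_congr rfl fun k _ => ?_
  have hcast : (r : ZMod N) * (1 + k) ^ 2 = ((r * (1 + k) ^ 2 : ℤ) : ZMod N) := by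
    push_cast
    rfl
  rw [hcast, ZMod.stdAddChar_coe]
  push_cast
  ring_nf

theorem sum_stdAddChar_mul_sq_of_prime {n : ℕ} [Fact (2 * n + 1).Prime] {r : ℤ}
    (hr : ¬((2 * n + 1 : ℕ) : ℤ) ∣ r) :
    ∑ x : ZMod (2 * n + 1), ZMod.stdAddChar ((r : ZMod (2 * n + 1)) * x ^ 2) =
      legendreSym (2 * n + 1) r * (I ^ (n % 2) * √(2 * n + 1 : ℕ)) := by
  have hchar : ringChar (ZMod (2 * n + 1)) ≠ 2 := by
    rw [ZMod.ringChar_zmod_n]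
    omega
  have hψ : (ZMod.stdAddChar : AddChar (ZMod (2 * n + 1)) ℂ) ≠ 1 := by
    rw [AddChar.zmod_char_ne_one_iff, Ne,
      (ZMod.isPrimitive_stdAddChar _).zmod_char_eq_one_iff]
    exact one_ne_zero
  rw [sum_addChar_mul_sq hchar hψ (mt (ZMod.intCast_zmod_eq_zero_iff_dvd r _).mp hr),
    sum_stdAddChar_sq, legendreSym]

theorem quadratic_gauss_sum_odd_prime (N : ℕ) [Fact N.Prime] (hodd : Odd N)
    (r : ℤ) (hr : ¬ (N : ℤ) ∣ r) :
    ((N % 4 = 1 →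
        ∑ l ∈ Finset.Icc 1 N,
            Complex.exp (2 * Real.pi * Complex.I * (r : ℂ) * (l : ℂ) ^ 2 / (N : ℂ)) =
          ((legendreSym N r : ℤ) : ℂ) * (Real.sqrt N : ℂ)) ∧
      (N % 4 = 3 →
        ∑ l ∈ Finset.Icc 1 N,
            Complex.exp (2 * Real.pi * Complex.I * (r : ℂ) * (l : ℂ) ^ 2 / (N : ℂ)) =
          Complex.I * ((legendreSym N r : ℤ) : ℂ) * (Real.sqrt N : ℂ))) := by
  obtain ⟨n, rfl⟩ := hodd
  rw [sum_Icc_exp_eq_sum_stdAddChar, sum_stdAddChar_mul_sq_of_prime hr]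
  constructor <;> intro hmod
  · rw [show n % 2 = 0 by omega, pow_zero, one_mul]
  · rw [show n % 2 = 1 by omega, pow_one]
    ring
end

section
/- For every positive integer N, the Gauss sum G(1,N) := ∑_{l=1}^{N} exp(2πi·l²/N) equals: (1+i)·√N if N ≡ 0 (mod 4); √N if N ≡ 1 (mod 4); 0 if N ≡ 2 (mod 4); and i·√N if N ≡ 3 (mod 4). -/
open Complex Finset

/-!
Write `θ(τ) = ∑ₙ exp(π i n² τ)`. Splitting the series into residue classes modulo `b` and applying
the functional equation to each class shows that `(-i w)^(1/2) θ(a/b + w)` tends to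
`(1/b) ∑_{l < b} exp(π i a l² / b)` as `w` tends to `0` inside the upper half-plane with
`im (-1/w) → ∞`. The inversion `τ ↦ -1/τ` maps the cusp `a/b` to `-b/a`, so comparing the two
leading coefficients gives the Landsberg–Schaar reciprocity between Gauss sums modulo `b` and
modulo `a`. For `a = 2` the reciprocal sum has only two terms.
-/

open Filter Topology

lemma sum_Icc_one_eq_sum_range {M : Type*} [AddCommMonoid M] {f : ℕ → M} {n : ℕ}
    (hf : f n = f 0) : ∑ l ∈ Icc 1 n, f l = ∑ l ∈ range n, f l := by
  cases n with
  | zero => simp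
  | succ k =>
    rw [← Ico_add_one_right_eq_Icc, sum_Ico_eq_sum_range, sum_range_succ', ← hf,
      Nat.add_sub_cancel, sum_range_succ]
    simp only [add_comm 1]

lemma tsum_int_eq_sum_range_tsum {E : Type*} [AddCommGroup E] [UniformSpace E]
    [IsUniformAddGroup E] [CompleteSpace E] [T0Space E] (b : ℕ) [NeZero b] {f : ℤ → E}
    (hf : Summable f) : ∑' n, f n = ∑ l ∈ range b, ∑' m : ℤ, f (m * b + l) := by
  let e : Fin b × ℤ ≃ ℤ := (Equiv.prodComm (Fin b) ℤ).trans (Int.divModEquiv b).symm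
  calc ∑' n, f n = ∑' p, f (e p) := (e.tsum_eq f).symm
    _ = ∑' (l : Fin b) (m : ℤ), f (e (l, m)) := (e.summable_iff.2 hf).tsum_prod
    _ = ∑ l : Fin b, ∑' m : ℤ, f (m * b + (l : ℕ)) := tsum_fintype _
    _ = ∑ l ∈ range b, ∑' m : ℤ, f (m * b + l) :=
      (sum_range fun l : ℕ ↦ ∑' m : ℤ, f (m * b + l)).symm

lemma ofReal_mul_cpow {x : ℝ} (hx : 0 ≤ x) (z s : ℂ) :
    ((x : ℂ) * z) ^ s = (x : ℂ) ^ s * z ^ s := by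
  rcases eq_or_ne s 0 with rfl | hs
  · simp only [cpow_zero, mul_one]
  rcases hx.eq_or_lt with rfl | hx
  · simp only [ofReal_zero, zero_mul, zero_cpow hs]
  rcases eq_or_ne z 0 with rfl | hz
  · simp only [mul_zero, zero_cpow hs]
  have hx' : (x : ℂ) ≠ 0 := ofReal_ne_zero.2 hx.ne'
  rw [cpow_def_of_ne_zero (mul_ne_zero hx' hz), cpow_def_of_ne_zero hx', cpow_def_of_ne_zero hz,
    log_ofReal_mul hx hz, ofReal_log hx.le, add_mul, exp_add]

lemma ofReal_mul_cpow_one_half {x : ℝ} (hx : 0 ≤ x) (z : ℂ) :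
    ((x : ℂ) * z) ^ (1 / 2 : ℂ) = √x * z ^ (1 / 2 : ℂ) := by
  rw [ofReal_mul_cpow hx, Real.sqrt_eq_rpow, ofReal_cpow hx]
  norm_num

lemma neg_I_mul_cpow_mul_inv_cpow {τ : ℂ} (hτ : 0 < τ.im) (s : ℂ) :
    (-I * τ) ^ s * τ⁻¹ ^ s = (-I) ^ s := by
  have hτ₀ : τ ≠ 0 := by rintro rfl; simp at hτ
  have hI : -I ≠ 0 := neg_ne_zero.2 I_ne_zero
  have harg_pos : 0 < τ.arg := (arg_nonneg_iff.2 hτ.le).lt_of_ne' fun h ↦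
    hτ.ne' (arg_eq_zero_iff.1 h).2
  have harg_lt : τ.arg < Real.pi := arg_lt_pi_iff.2 (Or.inr hτ.ne')
  have hlog : log (-I * τ) = log (-I) + log τ := by
    refine (log_mul_eq_add_log_iff hI hτ₀).2 ?_
    rw [arg_neg_I]
    constructor <;> linarith
  rw [inv_cpow _ _ harg_lt.ne, cpow_def_of_ne_zero (mul_ne_zero hI hτ₀), hlog, add_mul, exp_add,
    ← cpow_def_of_ne_zero hI, ← cpow_def_of_ne_zero hτ₀,
    mul_inv_cancel_right₀ (by simp [cpow_eq_zero_iff, hτ₀])]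

lemma neg_I_cpow_one_half : (-I) ^ (1 / 2 : ℂ) = cexp (-(Real.pi / 4 * I)) := by
  rw [cpow_def_of_ne_zero (neg_ne_zero.2 I_ne_zero), log_neg_I]
  congr 1
  ring

lemma tendsto_jacobiTheta₂_comap_im_atTop (z : ℂ) :
    Tendsto (jacobiTheta₂ z) (comap im atTop) (𝓝 1) := by
  have him : Tendsto im (comap im atTop) atTop := tendsto_comap
  have hterm (n : ℤ) : Tendsto (jacobiTheta₂_term n z) (comap im atTop)
      (𝓝 (if n = 0 then 1 else 0)) := by
    split_ifs with hn
    · exact tendsto_const_nhds.congr fun τ ↦ by simp [hn, jacobiTheta₂_term]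
    · rw [tendsto_zero_iff_norm_tendsto_zero]
      simp only [norm_jacobiTheta₂_term]
      refine Real.tendsto_exp_atBot.comp (tendsto_atBot_add_const_right _ _ ?_)
      refine him.const_mul_atTop_of_neg ?_
      have : 0 < Real.pi * n ^ 2 := by positivity
      linarith
  have hsum : Summable fun n : ℤ ↦ Real.exp (-Real.pi * (1 * n ^ 2 - 2 * |z.im| * |n|)) := by
    simpa only [pow_zero, one_mul] using
      summable_pow_mul_jacobiTheta₂_term_bound |z.im| one_pos 0
  have hlim := tendsto_tsum_of_dominated_convergence hsum hterm <| by
    filter_upwards [him.eventually_ge_atTop 1] with τ hτ n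
    exact norm_jacobiTheta₂_term_le one_pos le_rfl hτ n
  rwa [tsum_ite_eq] at hlim

lemma jacobiTheta_neg_one_div {τ : ℂ} (hτ : τ ≠ 0) :
    jacobiTheta (-1 / τ) = (-I * τ) ^ (1 / 2 : ℂ) * jacobiTheta τ := by
  have hne : (-I * τ) ^ (1 / 2 : ℂ) ≠ 0 := by simp [hτ]
  rw [jacobiTheta_eq_jacobiTheta₂, jacobiTheta_eq_jacobiTheta₂,
    jacobiTheta₂_functional_equation 0 τ, zero_div, zero_pow two_ne_zero, mul_zero, zero_div,
    exp_zero, mul_one, ← mul_assoc, mul_one_div_cancel hne, one_mul]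

lemma exp_mul_jacobiTheta₂_mul_self (x : ℂ) {τ : ℂ} (hτ : τ ≠ 0) :
    cexp (Real.pi * I * x ^ 2 * τ) * jacobiTheta₂ (x * τ) τ =
      1 / (-I * τ) ^ (1 / 2 : ℂ) * jacobiTheta₂ x (-1 / τ) := by
  have hexp : -Real.pi * I * (x * τ) ^ 2 / τ = -(Real.pi * I * x ^ 2 * τ) := by
    field_simp
  rw [jacobiTheta₂_functional_equation (x * τ) τ, mul_div_cancel_right₀ x hτ, hexp, exp_neg]
  field_simp [exp_ne_zero]

/-- The quadratic Gauss sum `∑_{0 ≤ l < b} exp(π i a l² / b)`. The normalization by `π i` instead of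
`2 π i` makes reciprocity symmetric; the summand depends only on `l` modulo `b` if `a * b` is
even. -/
noncomputable def quadraticGaussSum (a : ℤ) (b : ℕ) : ℂ :=
  ∑ l ∈ range b, cexp (Real.pi * I * a * l ^ 2 / b)

section QuadraticGaussSum

variable {a : ℤ} {b : ℕ} [NeZero b]

lemma exp_quadratic_add_mul (hab : Even (a * b)) (m l : ℤ) :
    cexp (Real.pi * I * a * ((m * b + l : ℤ) : ℂ) ^ 2 / b) =
      cexp (Real.pi * I * a * l ^ 2 / b) := by
  obtain ⟨k, hk⟩ := hab
  have hk' : (a * b : ℂ) = k + k := mod_cast hk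
  have hb : (b : ℂ) ≠ 0 := NeZero.ne _
  rw [exp_eq_exp_iff_exists_int]
  refine ⟨k * m ^ 2 + a * m * l, ?_⟩
  push_cast
  field_simp
  linear_combination (m ^ 2 * b : ℂ) * hk'

lemma quadraticGaussSum_eq_sum_Icc (hab : Even (a * b)) :
    quadraticGaussSum a b = ∑ l ∈ Icc 1 b, cexp (Real.pi * I * a * l ^ 2 / b) := by
  refine (sum_Icc_one_eq_sum_range ?_).symm
  simpa using exp_quadratic_add_mul hab 1 0

lemma jacobiTheta_div_add (hab : Even (a * b)) {w : ℂ} (hw : 0 < w.im) :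
    jacobiTheta (a / b + w) = ∑ l ∈ range b, cexp (Real.pi * I * a * l ^ 2 / b) *
      (1 / (-I * (b ^ 2 * w)) ^ (1 / 2 : ℂ) * jacobiTheta₂ (l / b) (-1 / (b ^ 2 * w))) := by
  have hb : (b : ℂ) ≠ 0 := NeZero.ne _
  have hw₀ : w ≠ 0 := by rintro rfl; simp at hw
  have him : 0 < (a / b + w : ℂ).im := by
    have : (a / b : ℂ) = ((a / b : ℝ) : ℂ) := by push_cast; rfl
    rwa [add_im, this, ofReal_im, zero_add]
  have hterm (m : ℤ) (l : ℕ) :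
      cexp (Real.pi * I * ((m * b + l : ℤ) : ℂ) ^ 2 * (a / b + w)) =
        cexp (Real.pi * I * a * l ^ 2 / b) * (cexp (Real.pi * I * (l / b) ^ 2 * (b ^ 2 * w)) *
          jacobiTheta₂_term m (l / b * (b ^ 2 * w)) (b ^ 2 * w)) := by
    have hper := exp_quadratic_add_mul hab m l
    rw [Int.cast_natCast] at hper
    rw [← hper, jacobiTheta₂_term, ← exp_add, ← exp_add]
    congr 1
    push_cast
    field_simp
    ring
  have hsum : Summable fun n : ℤ ↦ cexp (Real.pi * I * (n : ℂ) ^ 2 * (a / b + w)) := by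
    simpa [jacobiTheta₂_term] using (summable_jacobiTheta₂_term_iff 0 _).2 him
  rw [jacobiTheta, tsum_int_eq_sum_range_tsum b hsum]
  refine sum_congr rfl fun l _ ↦ ?_
  rw [← exp_mul_jacobiTheta₂_mul_self _ (mul_ne_zero (pow_ne_zero 2 hb) hw₀), jacobiTheta₂,
    ← tsum_mul_left, ← tsum_mul_left]
  exact tsum_congr fun m ↦ hterm m l

lemma im_pos_of_im_neg_one_div_pos {w : ℂ} (hw : 0 < (-1 / w).im) : 0 < w.im := by
  rw [neg_div, neg_im, one_div, inv_im, neg_div, neg_neg] at hw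
  exact (div_pos_iff_of_pos_right ((normSq_nonneg w).lt_of_ne' fun h ↦ by simp [h] at hw)).1 hw

lemma tendsto_jacobiTheta_div_add {α : Type*} {F : Filter α} {w : α → ℂ}
    (hab : Even (a * b)) (hw : Tendsto (fun x ↦ -1 / w x) F (comap im atTop)) :
    Tendsto (fun x ↦ (-I * w x) ^ (1 / 2 : ℂ) * jacobiTheta (a / b + w x)) F
      (𝓝 (quadraticGaussSum a b / b)) := by
  have hb : (b : ℂ) ≠ 0 := NeZero.ne _
  have hbpos : (0 : ℝ) < b := Nat.cast_pos.2 (NeZero.pos b)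
  have him : Tendsto (fun x ↦ (-1 / w x).im) F atTop := tendsto_comap_iff.1 hw
  have him' : Tendsto (fun x ↦ -1 / (b ^ 2 * w x)) F (comap im atTop) := by
    have hscale := him.const_mul_atTop (inv_pos.2 (pow_pos hbpos 2))
    refine tendsto_comap_iff.2 (hscale.congr fun x ↦ ?_)
    rw [Function.comp_apply, ← im_ofReal_mul]
    congr 1
    push_cast
    field_simp
  have hlim : Tendsto (fun x ↦ ∑ l ∈ range b, cexp (Real.pi * I * a * l ^ 2 / b) *
      (1 / b * jacobiTheta₂ (l / b) (-1 / (b ^ 2 * w x)))) F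
      (𝓝 (∑ l ∈ range b, cexp (Real.pi * I * a * l ^ 2 / b) * (1 / b * 1))) :=
    tendsto_finsetSum _ fun l _ ↦
      (((tendsto_jacobiTheta₂_comap_im_atTop _).comp him').const_mul _).const_mul _
  rw [← sum_mul, mul_one, mul_one_div] at hlim
  refine hlim.congr' ?_
  filter_upwards [him.eventually_gt_atTop 0] with x hx
  have hwx : 0 < (w x).im := im_pos_of_im_neg_one_div_pos hx
  have hw₀ : w x ≠ 0 := by rintro h; simp [h] at hwx
  have hsqrt : (-I * (b ^ 2 * w x)) ^ (1 / 2 : ℂ) = b * (-I * w x) ^ (1 / 2 : ℂ) := by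
    have h := ofReal_mul_cpow_one_half (sq_nonneg (b : ℝ)) (-I * w x)
    rw [Real.sqrt_sq hbpos.le] at h
    push_cast at h
    rw [← h, mul_left_comm]
  rw [jacobiTheta_div_add hab hwx, mul_sum, hsqrt]
  refine sum_congr rfl fun l _ ↦ ?_
  field_simp

end QuadraticGaussSum

lemma cpow_mul_jacobiTheta_neg_one_div_add {x t : ℝ} (hx : 0 < x) (ht : 0 < t) :
    (-I * (t / x * I * (x + t * I)⁻¹)) ^ (1 / 2 : ℂ) *
        jacobiTheta (-1 / x + t / x * I * (x + t * I)⁻¹) =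
      (-I) ^ (1 / 2 : ℂ) / √x * ((-I * (t * I)) ^ (1 / 2 : ℂ) * jacobiTheta (x + t * I)) := by
  have hτ_im : 0 < (x + t * I : ℂ).im := by simpa using ht
  have hxc : (x : ℂ) ≠ 0 := ofReal_ne_zero.2 hx.ne'
  have hsx : (√x : ℂ) ≠ 0 := ofReal_ne_zero.2 (Real.sqrt_pos.2 hx).ne'
  have hbranch := neg_I_mul_cpow_mul_inv_cpow hτ_im (1 / 2)
  obtain ⟨τ, hτ⟩ : ∃ τ : ℂ, τ = x + t * I := ⟨_, rfl⟩
  have hτ₀ : τ ≠ 0 := by rintro rfl; simp [← hτ] at hτ_im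
  rw [← hτ] at hbranch ⊢
  have hpoint : -1 / x + t / x * I * τ⁻¹ = -1 / τ := by
    field_simp
    linear_combination -hτ
  have hleft : -I * (t / x * I * τ⁻¹) = ((t / x : ℝ) : ℂ) * τ⁻¹ := by
    push_cast
    linear_combination (-(t / x * τ⁻¹) : ℂ) * I_sq
  have hright : -I * (t * I) = (t : ℂ) * 1 := by
    linear_combination (-t : ℂ) * I_sq
  rw [hpoint, jacobiTheta_neg_one_div hτ₀, hleft, hright,
    ofReal_mul_cpow_one_half (div_pos ht hx).le, ofReal_mul_cpow_one_half ht.le, one_cpow,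
    Real.sqrt_div ht.le, ofReal_div, ← hbranch]
  field_simp

lemma tendsto_neg_one_div_mul_I :
    Tendsto (fun t : ℝ ↦ -1 / (t * I)) (𝓝[>] 0) (comap im atTop) := by
  refine tendsto_comap_iff.2 (tendsto_inv_nhdsGT_zero.congr fun t ↦ ?_)
  rw [Function.comp_apply, div_mul_eq_div_div, div_I]
  simp [neg_div, ← ofReal_inv]

-- The path is the image of the vertical line above `x` under `τ ↦ -1 / τ`, translated by `1 / x`.
lemma tendsto_neg_one_div_mul_I_mul_inv {x : ℝ} (hx : x ≠ 0) :
    Tendsto (fun t : ℝ ↦ -1 / (t / x * I * (x + t * I)⁻¹)) (𝓝[>] 0) (comap im atTop) := by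
  have hscale := tendsto_inv_nhdsGT_zero.const_mul_atTop (sq_pos_of_ne_zero hx)
  refine tendsto_comap_iff.2 (hscale.congr' ?_)
  filter_upwards [self_mem_nhdsWithin] with t ht
  have hxc : (x : ℂ) ≠ 0 := ofReal_ne_zero.2 hx
  have htc : (t : ℂ) ≠ 0 := ofReal_ne_zero.2 (ne_of_gt ht)
  have hpoint : -1 / (t / x * I * (x + t * I)⁻¹) =
      ((-x : ℝ) : ℂ) + ((x ^ 2 * t⁻¹ : ℝ) : ℂ) * I := by
    push_cast
    field_simp
    linear_combination -x * I_sq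
  rw [Function.comp_apply, hpoint, add_im, ofReal_im, im_ofReal_mul, I_im, zero_add,
    mul_one]

lemma quadraticGaussSum_neg_div_eq {a b : ℕ} [NeZero a] [NeZero b] (hab : Even (a * b)) :
    quadraticGaussSum (-b) a / a =
      (-I) ^ (1 / 2 : ℂ) / √(a / b : ℝ) * (quadraticGaussSum a b / b) := by
  have hx : (0 : ℝ) < a / b :=
    div_pos (Nat.cast_pos.2 (NeZero.pos a)) (Nat.cast_pos.2 (NeZero.pos b))
  have hcusp := tendsto_jacobiTheta_div_add (a := a) (b := b) (mod_cast hab)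
    tendsto_neg_one_div_mul_I
  have hcusp_inv := tendsto_jacobiTheta_div_add (a := -b) (b := a)
    (by rw [neg_mul, even_neg, mul_comm]; exact_mod_cast hab)
    (tendsto_neg_one_div_mul_I_mul_inv hx.ne')
  refine tendsto_nhds_unique hcusp_inv ((hcusp.const_mul _).congr' ?_)
  filter_upwards [self_mem_nhdsWithin] with t ht
  have hbase : ((a / b : ℝ) : ℂ) = ((a : ℤ) : ℂ) / b := by push_cast; rfl
  have hbase_inv : (-1 / (a / b : ℝ) : ℂ) = ((-b : ℤ) : ℂ) / a := by
    push_cast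
    rw [neg_div, one_div_div, neg_div]
  rw [← hbase_inv, cpow_mul_jacobiTheta_neg_one_div_add hx ht, hbase]

/-- **Landsberg–Schaar reciprocity.** -/
theorem sqrt_mul_quadraticGaussSum {a b : ℕ} [NeZero a] [NeZero b] (hab : Even (a * b)) :
    √a * quadraticGaussSum a b = √b * cexp (Real.pi / 4 * I) * quadraticGaussSum (-b) a := by
  have ha : (0 : ℝ) < a := Nat.cast_pos.2 (NeZero.pos a)
  have hb : (0 : ℝ) < b := Nat.cast_pos.2 (NeZero.pos b)
  have hsqrt_a : (√a : ℂ) ≠ 0 := ofReal_ne_zero.2 (Real.sqrt_pos.2 ha).ne'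
  have hsqrt_b : (√b : ℂ) ≠ 0 := ofReal_ne_zero.2 (Real.sqrt_pos.2 hb).ne'
  have hsq_a : (a : ℂ) = (√a : ℂ) ^ 2 := mod_cast (Real.sq_sqrt ha.le).symm
  have hsq_b : (b : ℂ) = (√b : ℂ) ^ 2 := mod_cast (Real.sq_sqrt hb.le).symm
  have hexp : cexp (Real.pi / 4 * I) * (-I) ^ (1 / 2 : ℂ) = 1 := by
    rw [neg_I_cpow_one_half, ← exp_add, add_neg_cancel, exp_zero]
  have hinv := quadraticGaussSum_neg_div_eq hab
  rw [Real.sqrt_div ha.le, ofReal_div, hsq_a, hsq_b] at hinv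
  field_simp at hinv
  linear_combination (-cexp (Real.pi / 4 * I)) * hinv - √a * quadraticGaussSum a b * hexp

lemma quadraticGaussSum_neg_natCast_two (N : ℕ) : quadraticGaussSum (-N) 2 = 1 + (-I) ^ N := by
  have hI : cexp (-(Real.pi / 2 * I)) = -I := by
    rw [exp_neg, exp_pi_div_two_mul_I, inv_I]
  rw [quadraticGaussSum, sum_range_succ, sum_range_one, ← hI, ← exp_nat_mul]
  congr 1
  · simp
  · congr 1
    push_cast
    ring

lemma exp_pi_div_four_mul_I : cexp (Real.pi / 4 * I) = √2 / 2 * (1 + I) := by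
  have hπ : (Real.pi / 4 : ℂ) = ((Real.pi / 4 : ℝ) : ℂ) := by push_cast; rfl
  rw [exp_mul_I, hπ, ← ofReal_cos, ← ofReal_sin, Real.cos_pi_div_four, Real.sin_pi_div_four]
  push_cast
  ring

lemma quadraticGaussSum_two_left (N : ℕ) [NeZero N] :
    quadraticGaussSum 2 N = (1 + I) / 2 * √N * (1 + (-I) ^ N) := by
  have hsqrt : (√2 : ℂ) ≠ 0 := ofReal_ne_zero.2 (Real.sqrt_pos.2 two_pos).ne'
  have hrec := sqrt_mul_quadraticGaussSum (a := 2) (b := N) (even_two.mul_right N)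
  push_cast at hrec
  rw [quadraticGaussSum_neg_natCast_two, exp_pi_div_four_mul_I] at hrec
  refine mul_left_cancel₀ hsqrt ?_
  linear_combination hrec

theorem dirichlet_gauss_sum (N : ℕ) (hN : 0 < N) :
    (N % 4 = 0 →
        ∑ l ∈ Finset.Icc 1 N,
            Complex.exp (2 * Real.pi * Complex.I * (l : ℂ) ^ 2 / (N : ℂ)) =
          (1 + Complex.I) * (Real.sqrt N : ℂ)) ∧
      (N % 4 = 1 →
        ∑ l ∈ Finset.Icc 1 N,
            Complex.exp (2 * Real.pi * Complex.I * (l : ℂ) ^ 2 / (N : ℂ)) =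
          (Real.sqrt N : ℂ)) ∧
      (N % 4 = 2 →
        ∑ l ∈ Finset.Icc 1 N,
            Complex.exp (2 * Real.pi * Complex.I * (l : ℂ) ^ 2 / (N : ℂ)) = 0) ∧
      (N % 4 = 3 →
        ∑ l ∈ Finset.Icc 1 N,
            Complex.exp (2 * Real.pi * Complex.I * (l : ℂ) ^ 2 / (N : ℂ)) =
          Complex.I * (Real.sqrt N : ℂ)) := by
  have : NeZero N := ⟨hN.ne'⟩
  have hsum : ∑ l ∈ Icc 1 N, cexp (2 * Real.pi * I * (l : ℂ) ^ 2 / N) =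
      quadraticGaussSum 2 N := by
    rw [quadraticGaussSum_eq_sum_Icc (even_two.mul_right _)]
    refine sum_congr rfl fun l _ ↦ congrArg cexp ?_
    push_cast
    ring
  have hpow : (-I) ^ N = (-I) ^ (N % 4) := pow_eq_pow_mod N (by rw [neg_pow, I_pow_four]; norm_num)
  rw [hsum, quadraticGaussSum_two_left, hpow]
  refine ⟨?_, ?_, ?_, ?_⟩ <;> intro h <;> rw [h]
  · ring
  · linear_combination (-(√N : ℂ) / 2) * I_sq
  · linear_combination ((1 + I) / 2 * (√N : ℂ)) * I_sq
  · linear_combination (-(√N : ℂ) / 2 * (I ^ 2 + I - 1)) * I_sq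
end
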